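/- Let N ≥ 1 be an integer, δ > 0, and let m ≥ 2 be an integer. Define h(s,x) = (|x|^{-2} + 1) Σ_{j=1}^{m} s^{(j-1)/2} χ_j(x) + (1+s) s^{(m-2)/2} for s > 0, x ∈ ℝ^N, with the χ_j as in the context. Then for every t > 0 and every x ∈ ℝ^N, ∫₀ᵗ (e^{(t-s)Δ} h(s,·))(x) ds ≤ t^{1/2}(1 + a_m^{-2}) ( t^{m/2} + Σ_{j=2}^{m} t^{(j-1)/2} χ_j(x) ) + m 2^{N/2} (1 + a_m^{-2}) (1 + t^{(m+1)/2}) exp(-a_{m+1}²/(8t)) + 2 (1/m + t/(m+2)) t^{m/2}. -/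

import Mathlib

open MeasureTheory Real Set Filter ENNReal

/-- The Gaussian heat kernel `G(t,x,y) = (4πt)^{-N/2} exp(-|x-y|²/(4t))` on `ℝ^N`. -/
noncomputable def heatKernel (N : ℕ) (t : ℝ) (x y : EuclideanSpace ℝ (Fin N)) : ℝ :=
  (4 * π * t) ^ (-(N : ℝ) / 2) * Real.exp (-‖x - y‖ ^ 2 / (4 * t))

/-- `a_j = 2^{-j} δ`. -/
noncomputable def aCoef (δ : ℝ) (j : ℕ) : ℝ := 2 ^ (-(j : ℝ)) * δ

/-- The cutoff function `χ_j(x) = θ(|x|/a_j)`. -/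
noncomputable def cut (θ : ℝ → ℝ) (δ : ℝ) (j : ℕ) {N : ℕ}
    (x : EuclideanSpace ℝ (Fin N)) : ℝ :=
  θ (‖x‖ / aCoef δ j)

/-- `h(s,x) = (|x|^{-2} + 1) Σ_{j=1}^{m} s^{(j-1)/2} χ_j(x) + (1+s) s^{(m-2)/2}`. -/
noncomputable def hFun (θ : ℝ → ℝ) (δ : ℝ) (m : ℕ) {N : ℕ} (s : ℝ)
    (x : EuclideanSpace ℝ (Fin N)) : ℝ :=
  (‖x‖ ^ (-(2 : ℝ)) + 1) * (∑ j ∈ Finset.Icc 1 m, s ^ (((j : ℝ) - 1) / 2) * cut θ δ j x) +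
    (1 + s) * s ^ (((m : ℝ) - 2) / 2)

/-!
Under `e^{TΔ}` the point `y` is distributed as a Gaussian around `x`. Comparing the kernels at times
`T` and `2T` shows that `|x - y| ≥ a` has probability at most `2^{N/2} exp(-a²/(8T))`. Since
`a_j = 2 a_{j+1}`, the cutoffs satisfy `χ_j(y) ≤ χ_{j+1}(x)` as soon as `|x - y| ≤ a_{j+1}`, so
`e^{TΔ} χ_j (x) ≤ χ_{j+1}(x) + 2^{N/2} exp(-a_{j+1}²/(8T))`. The singular weight `|y|⁻² + 1` is at
most `1 + a_j⁻²` on the support of `χ_j`. What remains is to integrate powers of `s` over `(0, t)`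
and to shift the summation index from `j` to `j + 1`.
-/

section HeatKernel

variable {N : ℕ} {t : ℝ}

lemma heatKernel_nonneg (ht : 0 ≤ t) (x y : EuclideanSpace ℝ (Fin N)) :
    0 ≤ heatKernel N t x y := by
  unfold heatKernel
  positivity

lemma measurable_heatKernel (x : EuclideanSpace ℝ (Fin N)) : Measurable (heatKernel N t x) := by
  unfold heatKernel
  fun_prop

lemma integral_heatKernel (ht : 0 < t) (x : EuclideanSpace ℝ (Fin N)) :
    ∫ y, heatKernel N t x y = 1 := by
  have gaussian := GaussianFourier.integral_rexp_neg_mul_sq_norm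
    (V := EuclideanSpace ℝ (Fin N)) (b := (4 * t)⁻¹) (by positivity)
  rw [finrank_euclideanSpace_fin, div_inv_eq_mul, ← mul_assoc, mul_comm π 4] at gaussian
  calc ∫ y, heatKernel N t x y
      = (4 * π * t) ^ (-(N : ℝ) / 2) * ∫ y, rexp (-(4 * t)⁻¹ * ‖x - y‖ ^ 2) := by
        simp only [heatKernel, integral_const_mul, div_eq_inv_mul, mul_neg, neg_mul]
    _ = (4 * π * t) ^ (-(N : ℝ) / 2) * (4 * π * t) ^ ((N : ℝ) / 2) := by
        rw [integral_sub_left_eq_self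
          (fun z : EuclideanSpace ℝ (Fin N) ↦ rexp (-(4 * t)⁻¹ * ‖z‖ ^ 2)) volume x, gaussian]
    _ = 1 := by
        rw [← rpow_add (by positivity), neg_div, neg_add_cancel, Real.rpow_zero]

lemma lintegral_heatKernel (ht : 0 < t) (x : EuclideanSpace ℝ (Fin N)) :
    ∫⁻ y, ENNReal.ofReal (heatKernel N t x y) = 1 := by
  have integrable : Integrable (heatKernel N t x) :=
    .of_integral_ne_zero (integral_heatKernel ht x ▸ one_ne_zero)
  rw [← ofReal_integral_eq_lintegral_ofReal integrable
    (Eventually.of_forall (heatKernel_nonneg ht.le x)), integral_heatKernel ht, ofReal_one]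

lemma heatKernel_le_of_le_norm_sub (ht : 0 < t) {a : ℝ} (ha : 0 ≤ a)
    {x y : EuclideanSpace ℝ (Fin N)} (hxy : a ≤ ‖x - y‖) :
    heatKernel N t x y ≤
      2 ^ ((N : ℝ) / 2) * rexp (-a ^ 2 / (8 * t)) * heatKernel N (2 * t) x y := by
  have prefactor : (4 * π * t) ^ (-(N : ℝ) / 2) =
      2 ^ ((N : ℝ) / 2) * (4 * π * (2 * t)) ^ (-(N : ℝ) / 2) := by
    rw [mul_left_comm (4 * π), mul_rpow two_pos.le (by positivity), ← mul_assoc,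
      ← rpow_add two_pos, neg_div, add_neg_cancel, Real.rpow_zero, one_mul]
  have exponential : rexp (-‖x - y‖ ^ 2 / (4 * t)) ≤
      rexp (-a ^ 2 / (8 * t)) * rexp (-‖x - y‖ ^ 2 / (4 * (2 * t))) := by
    rw [← exp_add, exp_le_exp]
    calc -‖x - y‖ ^ 2 / (4 * t)
        = -‖x - y‖ ^ 2 / (8 * t) + -‖x - y‖ ^ 2 / (4 * (2 * t)) := by field_simp; ring
      _ ≤ -a ^ 2 / (8 * t) + -‖x - y‖ ^ 2 / (4 * (2 * t)) := by gcongr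
  calc heatKernel N t x y
      ≤ (4 * π * t) ^ (-(N : ℝ) / 2) *
          (rexp (-a ^ 2 / (8 * t)) * rexp (-‖x - y‖ ^ 2 / (4 * (2 * t)))) := by
        unfold heatKernel
        gcongr
    _ = 2 ^ ((N : ℝ) / 2) * rexp (-a ^ 2 / (8 * t)) * heatKernel N (2 * t) x y := by
        rw [prefactor, heatKernel]
        ring

/-- The Gaussian measure with density `G(t,x,·)`, so that `(e^{tΔ}φ)(x) = ∫ φ ∂(heatMeasure t x)`
for nonnegative measurable `φ`. -/
noncomputable def heatMeasure (t : ℝ) (x : EuclideanSpace ℝ (Fin N)) :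
    Measure (EuclideanSpace ℝ (Fin N)) :=
  volume.withDensity fun y ↦ ENNReal.ofReal (heatKernel N t x y)

lemma isProbabilityMeasure_heatMeasure (ht : 0 < t) (x : EuclideanSpace ℝ (Fin N)) :
    IsProbabilityMeasure (heatMeasure t x) :=
  ⟨by rw [heatMeasure, withDensity_apply _ .univ, setLIntegral_univ, lintegral_heatKernel ht]⟩

lemma lintegral_ofReal_heatKernel_mul (ht : 0 ≤ t) {φ : EuclideanSpace ℝ (Fin N) → ℝ}
    (hφ : Measurable φ) (x : EuclideanSpace ℝ (Fin N)) :
    ∫⁻ y, ENNReal.ofReal (heatKernel N t x y * φ y) =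
      ∫⁻ y, ENNReal.ofReal (φ y) ∂heatMeasure t x := by
  rw [heatMeasure, lintegral_withDensity_eq_lintegral_mul _
    (measurable_heatKernel x).ennreal_ofReal hφ.ennreal_ofReal]
  exact lintegral_congr fun y ↦ ofReal_mul (heatKernel_nonneg ht x y)

lemma heatMeasure_setOf_le_norm_sub_le (ht : 0 < t) {a : ℝ} (ha : 0 ≤ a)
    (x : EuclideanSpace ℝ (Fin N)) :
    heatMeasure t x {y | a ≤ ‖x - y‖} ≤
      ENNReal.ofReal (2 ^ ((N : ℝ) / 2) * rexp (-a ^ 2 / (8 * t))) := by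
  have measurableSet_far : MeasurableSet {y | a ≤ ‖x - y‖} :=
    measurableSet_le measurable_const (by fun_prop)
  set C : ℝ := 2 ^ ((N : ℝ) / 2) * rexp (-a ^ 2 / (8 * t))
  have C_nonneg : 0 ≤ C := by positivity
  calc heatMeasure t x {y | a ≤ ‖x - y‖}
      = ∫⁻ y in {y | a ≤ ‖x - y‖}, ENNReal.ofReal (heatKernel N t x y) :=
        withDensity_apply _ measurableSet_far
    _ ≤ ∫⁻ y in {y | a ≤ ‖x - y‖},
          ENNReal.ofReal C * ENNReal.ofReal (heatKernel N (2 * t) x y) := by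
        refine setLIntegral_mono' measurableSet_far fun y hy ↦ ?_
        rw [← ofReal_mul C_nonneg]
        exact ofReal_le_ofReal (heatKernel_le_of_le_norm_sub ht ha hy)
    _ ≤ ∫⁻ y, ENNReal.ofReal C * ENNReal.ofReal (heatKernel N (2 * t) x y) :=
        setLIntegral_le_lintegral _ _
    _ = ENNReal.ofReal C := by
        rw [lintegral_const_mul' _ _ ofReal_ne_top, lintegral_heatKernel (by positivity), mul_one]

end HeatKernel

section Scales

variable {δ : ℝ}

lemma aCoef_pos (hδ : 0 < δ) (j : ℕ) : 0 < aCoef δ j := by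
  unfold aCoef
  positivity

lemma aCoef_antitone (hδ : 0 ≤ δ) : Antitone (aCoef δ) := fun i j hij ↦ by
  unfold aCoef
  gcongr
  exact one_le_two

lemma aCoef_eq_two_mul_aCoef_succ (δ : ℝ) (j : ℕ) : aCoef δ j = 2 * aCoef δ (j + 1) := by
  unfold aCoef
  rw [Nat.cast_succ, neg_add, rpow_add two_pos, Real.rpow_neg_one]
  ring

end Scales

/-- A profile `θ` for the cutoffs `χ_j = θ(|·|/a_j)`. The bound `θ ≤ 1` takes the place of the
condition that `θ = 1` on `[2, ∞)`. -/
structure IsCutoff (θ : ℝ → ℝ) : Prop where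
  monotone : Monotone θ
  eq_zero_of_le_one : ∀ s ≤ 1, θ s = 0
  le_one : ∀ s, θ s ≤ 1

namespace IsCutoff

variable {θ : ℝ → ℝ}

lemma nonneg (hθ : IsCutoff θ) (s : ℝ) : 0 ≤ θ s :=
  (hθ.eq_zero_of_le_one _ (min_le_right s 1)).ge.trans (hθ.monotone (min_le_left s 1))

lemma apply_norm_div_two_mul_le {E : Type*} [SeminormedAddCommGroup E] (hθ : IsCutoff θ) {a : ℝ}
    (ha : 0 < a) {x y : E} (hxy : ‖x - y‖ ≤ a) : θ (‖y‖ / (2 * a)) ≤ θ (‖x‖ / a) := by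
  rcases le_or_gt ‖y‖ (2 * a) with hy | hy
  · rw [hθ.eq_zero_of_le_one _ (div_le_one_of_le₀ hy (by positivity))]
    exact hθ.nonneg _
  · have norm_y_le : ‖y‖ ≤ 2 * ‖x‖ := by
      linarith [norm_sub_norm_le y x, norm_sub_rev y x]
    apply hθ.monotone
    rw [← div_div]
    gcongr
    linarith

variable {N : ℕ} {δ : ℝ}

lemma cut_nonneg (hθ : IsCutoff θ) (δ : ℝ) (j : ℕ) (x : EuclideanSpace ℝ (Fin N)) :
    0 ≤ cut θ δ j x :=
  hθ.nonneg _

lemma measurable_cut (hθ : IsCutoff θ) (δ : ℝ) (j : ℕ) :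
    Measurable (cut θ δ j : EuclideanSpace ℝ (Fin N) → ℝ) :=
  hθ.monotone.measurable.comp (by fun_prop)

lemma cut_le_cut_succ_add_indicator (hθ : IsCutoff θ) (hδ : 0 < δ) (j : ℕ)
    (x y : EuclideanSpace ℝ (Fin N)) :
    ENNReal.ofReal (cut θ δ j y) ≤ ENNReal.ofReal (cut θ δ (j + 1) x) +
      {z | aCoef δ (j + 1) ≤ ‖x - z‖}.indicator 1 y := by
  by_cases hxy : y ∈ {z | aCoef δ (j + 1) ≤ ‖x - z‖}
  · rw [indicator_of_mem hxy]
    exact (ofReal_le_one.2 (hθ.le_one _)).trans le_add_self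
  · have cut_le : cut θ δ j y ≤ cut θ δ (j + 1) x := by
      rw [cut, aCoef_eq_two_mul_aCoef_succ]
      exact hθ.apply_norm_div_two_mul_le (aCoef_pos hδ _) (not_le.1 hxy).le
    exact (ofReal_le_ofReal cut_le).trans le_self_add

lemma lintegral_cut_heatMeasure_le (hθ : IsCutoff θ) (hδ : 0 < δ) (j : ℕ) {T : ℝ} (hT : 0 < T)
    (x : EuclideanSpace ℝ (Fin N)) :
    ∫⁻ y, ENNReal.ofReal (cut θ δ j y) ∂heatMeasure T x ≤
      ENNReal.ofReal (cut θ δ (j + 1) x +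
        2 ^ ((N : ℝ) / 2) * rexp (-aCoef δ (j + 1) ^ 2 / (8 * T))) := by
  have := isProbabilityMeasure_heatMeasure hT x
  have measurableSet_far : MeasurableSet {z | aCoef δ (j + 1) ≤ ‖x - z‖} :=
    measurableSet_le measurable_const (by fun_prop)
  calc ∫⁻ y, ENNReal.ofReal (cut θ δ j y) ∂heatMeasure T x
      ≤ ∫⁻ y, (ENNReal.ofReal (cut θ δ (j + 1) x) +
          {z | aCoef δ (j + 1) ≤ ‖x - z‖}.indicator 1 y) ∂heatMeasure T x :=
        lintegral_mono (hθ.cut_le_cut_succ_add_indicator hδ j x)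
    _ = ENNReal.ofReal (cut θ δ (j + 1) x) +
          heatMeasure T x {z | aCoef δ (j + 1) ≤ ‖x - z‖} := by
        rw [lintegral_add_left measurable_const, lintegral_const, measure_univ, mul_one,
          lintegral_indicator_one measurableSet_far]
    _ ≤ _ := by
        rw [ofReal_add (hθ.cut_nonneg ..) (by positivity)]
        gcongr
        exact heatMeasure_setOf_le_norm_sub_le hT (aCoef_pos hδ _).le x

lemma rpow_neg_two_add_one_mul_cut_le (hθ : IsCutoff θ) (hδ : 0 < δ) (j : ℕ)
    (y : EuclideanSpace ℝ (Fin N)) :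
    (‖y‖ ^ (-(2 : ℝ)) + 1) * cut θ δ j y ≤ (1 + aCoef δ j ^ (-(2 : ℝ))) * cut θ δ j y := by
  have a_pos := aCoef_pos hδ j
  rcases le_or_gt ‖y‖ (aCoef δ j) with hy | hy
  · have cut_eq_zero : cut θ δ j y = 0 :=
      hθ.eq_zero_of_le_one _ (div_le_one_of_le₀ hy a_pos.le)
    rw [cut_eq_zero, mul_zero, mul_zero]
  · have cut_nonneg := hθ.cut_nonneg δ j y
    have norm_rpow_le : ‖y‖ ^ (-(2 : ℝ)) ≤ aCoef δ j ^ (-(2 : ℝ)) :=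
      rpow_le_rpow_of_nonpos a_pos hy.le (by norm_num)
    rw [add_comm]
    gcongr

lemma lintegral_weight_mul_cut_heatMeasure_le (hθ : IsCutoff θ) (hδ : 0 < δ) {j m : ℕ}
    (hjm : j ≤ m) {T t : ℝ} (hT : 0 < T) (hTt : T ≤ t) (x : EuclideanSpace ℝ (Fin N)) :
    ∫⁻ y, ENNReal.ofReal ((‖y‖ ^ (-(2 : ℝ)) + 1) * cut θ δ j y) ∂heatMeasure T x ≤
      ENNReal.ofReal ((1 + aCoef δ m ^ (-(2 : ℝ))) * (cut θ δ (j + 1) x +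
        2 ^ ((N : ℝ) / 2) * rexp (-aCoef δ (m + 1) ^ 2 / (8 * t)))) := by
  have am_pos := aCoef_pos hδ m
  have am_succ_pos := aCoef_pos hδ (m + 1)
  have aj_pos := aCoef_pos hδ j
  have weight_le : 1 + aCoef δ j ^ (-(2 : ℝ)) ≤ 1 + aCoef δ m ^ (-(2 : ℝ)) := by
    gcongr 1 + ?_
    exact rpow_le_rpow_of_nonpos am_pos (aCoef_antitone hδ.le hjm) (by norm_num)
  have exp_le : rexp (-aCoef δ (j + 1) ^ 2 / (8 * T)) ≤
      rexp (-aCoef δ (m + 1) ^ 2 / (8 * t)) := by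
    rw [neg_div, neg_div]
    gcongr
    exact aCoef_antitone hδ.le (by gcongr)
  have cut_nonneg := hθ.cut_nonneg δ (j + 1) x
  calc ∫⁻ y, ENNReal.ofReal ((‖y‖ ^ (-(2 : ℝ)) + 1) * cut θ δ j y) ∂heatMeasure T x
      ≤ ∫⁻ y, ENNReal.ofReal (1 + aCoef δ j ^ (-(2 : ℝ))) * ENNReal.ofReal (cut θ δ j y)
          ∂heatMeasure T x := by
        refine lintegral_mono fun y ↦ ?_
        rw [← ofReal_mul (by positivity)]
        exact ofReal_le_ofReal (hθ.rpow_neg_two_add_one_mul_cut_le hδ j y)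
    _ ≤ ENNReal.ofReal (1 + aCoef δ j ^ (-(2 : ℝ))) * ENNReal.ofReal (cut θ δ (j + 1) x +
          2 ^ ((N : ℝ) / 2) * rexp (-aCoef δ (j + 1) ^ 2 / (8 * T))) := by
        rw [lintegral_const_mul' _ _ ofReal_ne_top]
        gcongr
        exact hθ.lintegral_cut_heatMeasure_le hδ j hT x
    _ ≤ _ := by
        rw [← ofReal_mul (by positivity)]
        gcongr

lemma measurable_hFun (hθ : IsCutoff θ) (δ : ℝ) (m : ℕ) (s : ℝ) :
    Measurable (hFun θ δ m s : EuclideanSpace ℝ (Fin N) → ℝ) := by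
  have := fun j ↦ hθ.measurable_cut (N := N) δ j
  unfold hFun
  fun_prop

lemma ofReal_hFun (hθ : IsCutoff θ) (δ : ℝ) (m : ℕ) {s : ℝ} (hs : 0 ≤ s)
    (y : EuclideanSpace ℝ (Fin N)) :
    ENNReal.ofReal (hFun θ δ m s y) =
      ∑ j ∈ Finset.Icc 1 m, ENNReal.ofReal (s ^ (((j : ℝ) - 1) / 2)) *
          ENNReal.ofReal ((‖y‖ ^ (-(2 : ℝ)) + 1) * cut θ δ j y) +
        ENNReal.ofReal ((1 + s) * s ^ (((m : ℝ) - 2) / 2)) := by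
  have term_nonneg (j : ℕ) :
      0 ≤ s ^ (((j : ℝ) - 1) / 2) * ((‖y‖ ^ (-(2 : ℝ)) + 1) * cut θ δ j y) := by
    have := hθ.cut_nonneg δ j y
    positivity
  simp only [hFun, Finset.mul_sum, mul_left_comm (‖y‖ ^ (-(2 : ℝ)) + 1)]
  rw [ofReal_add (Finset.sum_nonneg fun j _ ↦ term_nonneg j) (by positivity),
    ofReal_sum_of_nonneg fun j _ ↦ term_nonneg j]
  congr! 2 with j
  exact ofReal_mul (by positivity)

lemma lintegral_hFun_heatMeasure_le (hθ : IsCutoff θ) (hδ : 0 < δ) (m : ℕ) {s T t : ℝ}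
    (hs : 0 ≤ s) (hT : 0 < T) (hTt : T ≤ t) (x : EuclideanSpace ℝ (Fin N)) :
    ∫⁻ y, ENNReal.ofReal (hFun θ δ m s y) ∂heatMeasure T x ≤
      ∑ j ∈ Finset.Icc 1 m, ENNReal.ofReal (s ^ (((j : ℝ) - 1) / 2)) *
          ENNReal.ofReal ((1 + aCoef δ m ^ (-(2 : ℝ))) * (cut θ δ (j + 1) x +
            2 ^ ((N : ℝ) / 2) * rexp (-aCoef δ (m + 1) ^ 2 / (8 * t)))) +
        ENNReal.ofReal ((1 + s) * s ^ (((m : ℝ) - 2) / 2)) := by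
  have := isProbabilityMeasure_heatMeasure hT x
  have := fun j ↦ hθ.measurable_cut (N := N) δ j
  simp only [hθ.ofReal_hFun δ m hs]
  rw [lintegral_add_right _ measurable_const, lintegral_const, measure_univ, mul_one,
    lintegral_finsetSum _ fun j _ ↦ by fun_prop]
  gcongr with j hj
  rw [lintegral_const_mul' _ _ ofReal_ne_top]
  gcongr
  exact hθ.lintegral_weight_mul_cut_heatMeasure_le hδ (Finset.mem_Icc.1 hj).2 hT hTt x

end IsCutoff

section TimeIntegrals

variable {t r : ℝ}

lemma lintegral_Ioo_ofReal_rpow (ht : 0 ≤ t) (hr : -1 < r) :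
    ∫⁻ s in Ioo 0 t, ENNReal.ofReal (s ^ r) = ENNReal.ofReal (t ^ (r + 1) / (r + 1)) := by
  have integrableOn : IntegrableOn (fun s : ℝ ↦ s ^ r) (Ioo 0 t) :=
    (intervalIntegrable_iff_integrableOn_Ioo_of_le ht).1
      (intervalIntegral.intervalIntegrable_rpow' hr)
  have nonneg : ∀ᵐ s : ℝ ∂volume.restrict (Ioo 0 t), 0 ≤ s ^ r :=
    ae_restrict_of_forall_mem measurableSet_Ioo fun s hs ↦ rpow_nonneg hs.1.le r
  rw [← ofReal_integral_eq_lintegral_ofReal integrableOn nonneg, ← integral_Ioc_eq_integral_Ioo,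
    ← intervalIntegral.integral_of_le ht, integral_rpow (.inl hr), zero_rpow (by linarith),
    sub_zero]

lemma lintegral_Ioo_ofReal_rpow_le (ht : 0 ≤ t) (hr : 0 ≤ r) :
    ∫⁻ s in Ioo 0 t, ENNReal.ofReal (s ^ r) ≤ ENNReal.ofReal (t ^ (r + 1)) := by
  rw [lintegral_Ioo_ofReal_rpow ht (by linarith)]
  exact ofReal_le_ofReal (div_le_self (by positivity) (by linarith))

lemma lintegral_Ioo_ofReal_one_add_mul_rpow (ht : 0 < t) (hr : 0 < r) :
    ∫⁻ s in Ioo 0 t, ENNReal.ofReal ((1 + s) * s ^ (r - 1)) =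
      ENNReal.ofReal ((1 / r + t / (r + 1)) * t ^ r) := by
  have expand : ∀ s ∈ Ioo 0 t, ENNReal.ofReal ((1 + s) * s ^ (r - 1)) =
      ENNReal.ofReal (s ^ (r - 1)) + ENNReal.ofReal (s ^ r) := fun s hs ↦ by
    have s_pos : 0 < s := hs.1
    rw [← ofReal_add (by positivity) (by positivity), one_add_mul, mul_comm s,
      ← rpow_add_one s_pos.ne', sub_add_cancel]
  rw [setLIntegral_congr_fun measurableSet_Ioo expand, lintegral_add_left (by fun_prop),
    lintegral_Ioo_ofReal_rpow ht.le (by linarith), lintegral_Ioo_ofReal_rpow ht.le (by linarith),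
    sub_add_cancel, ← ofReal_add (by positivity) (by positivity), rpow_add_one ht.ne']
  congr 1
  ring

lemma lintegral_Ioo_sum_rpow_half_add_le (ht : 0 < t) {m : ℕ} (hm : 1 ≤ m) {C : ℕ → ℝ}
    (hC : ∀ j, 0 ≤ C j) :
    ∫⁻ s in Ioo 0 t, (∑ j ∈ Finset.Icc 1 m,
        ENNReal.ofReal (s ^ (((j : ℝ) - 1) / 2)) * ENNReal.ofReal (C j) +
          ENNReal.ofReal ((1 + s) * s ^ (((m : ℝ) - 2) / 2))) ≤
      ENNReal.ofReal (∑ j ∈ Finset.Icc 1 m, t ^ (((j : ℝ) + 1) / 2) * C j +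
        2 * (1 / (m : ℝ) + t / ((m : ℝ) + 2)) * t ^ ((m : ℝ) / 2)) := by
  have term_le : ∀ j ∈ Finset.Icc 1 m,
      ∫⁻ s in Ioo 0 t, ENNReal.ofReal (s ^ (((j : ℝ) - 1) / 2)) ≤
        ENNReal.ofReal (t ^ (((j : ℝ) + 1) / 2)) := fun j hj ↦ by
    have one_le_j : (1 : ℝ) ≤ j := mod_cast (Finset.mem_Icc.1 hj).1
    rw [show ((j : ℝ) + 1) / 2 = ((j : ℝ) - 1) / 2 + 1 by ring]
    exact lintegral_Ioo_ofReal_rpow_le ht.le (by linarith)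
  have remainder : ∫⁻ s in Ioo 0 t, ENNReal.ofReal ((1 + s) * s ^ (((m : ℝ) - 2) / 2)) =
      ENNReal.ofReal (2 * (1 / (m : ℝ) + t / ((m : ℝ) + 2)) * t ^ ((m : ℝ) / 2)) := by
    rw [show ((m : ℝ) - 2) / 2 = (m : ℝ) / 2 - 1 by ring,
      lintegral_Ioo_ofReal_one_add_mul_rpow ht (by positivity)]
    congr 2
    field_simp
  rw [lintegral_add_left (by fun_prop), lintegral_finsetSum _ fun j _ ↦ by fun_prop, remainder,
    ofReal_add (Finset.sum_nonneg fun j _ ↦ mul_nonneg (by positivity) (hC j)) (by positivity),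
    ofReal_sum_of_nonneg fun j _ ↦ mul_nonneg (by positivity) (hC j)]
  gcongr with j hj
  rw [lintegral_mul_const' _ _ ofReal_ne_top, ofReal_mul (by positivity)]
  gcongr
  exact term_le j hj

end TimeIntegrals

section Sums

variable {t : ℝ}

lemma rpow_le_one_add_rpow (ht : 0 ≤ t) {p q : ℝ} (hp : 0 ≤ p) (hpq : p ≤ q) :
    t ^ p ≤ 1 + t ^ q := by
  rcases le_total t 1 with h | h
  · exact (rpow_le_one ht h hp).trans (le_add_of_nonneg_right (rpow_nonneg ht q))
  · exact (rpow_le_rpow_of_exponent_le h hpq).trans (le_add_of_nonneg_left zero_le_one)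

lemma sum_rpow_half_le (ht : 0 ≤ t) (m : ℕ) :
    ∑ j ∈ Finset.Icc 1 m, t ^ (((j : ℝ) + 1) / 2) ≤ m * (1 + t ^ (((m : ℝ) + 1) / 2)) := by
  have term_le : ∀ j ∈ Finset.Icc 1 m,
      t ^ (((j : ℝ) + 1) / 2) ≤ 1 + t ^ (((m : ℝ) + 1) / 2) := fun j hj ↦ by
    have := (Finset.mem_Icc.1 hj).2
    exact rpow_le_one_add_rpow ht (by positivity) (by gcongr)
  simpa only [Nat.card_Icc, add_tsub_cancel_right, nsmul_eq_mul] using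
    Finset.sum_le_card_nsmul _ _ _ term_le

lemma sum_rpow_half_mul_succ_le (ht : 0 < t) {m : ℕ} (hm : 1 ≤ m) {c : ℕ → ℝ}
    (hc : c (m + 1) ≤ 1) :
    ∑ j ∈ Finset.Icc 1 m, t ^ (((j : ℝ) + 1) / 2) * c (j + 1) ≤
      t ^ ((1 : ℝ) / 2) *
        (t ^ ((m : ℝ) / 2) + ∑ j ∈ Finset.Icc 2 m, t ^ (((j : ℝ) - 1) / 2) * c j) := by
  have factor (j : ℕ) : t ^ (((j : ℝ) + 1) / 2) * c (j + 1) =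
      t ^ ((1 : ℝ) / 2) * (t ^ ((((j + 1 : ℕ) : ℝ) - 1) / 2) * c (j + 1)) := by
    rw [← mul_assoc, ← rpow_add ht]
    push_cast
    ring_nf
  have shift : ∑ j ∈ Finset.Icc 1 m, t ^ ((((j + 1 : ℕ) : ℝ) - 1) / 2) * c (j + 1) =
      ∑ j ∈ Finset.Icc 2 (m + 1), t ^ (((j : ℝ) - 1) / 2) * c j := by
    simp only [← Finset.Ico_add_one_right_eq_Icc]
    exact Finset.sum_Ico_add' (fun j : ℕ ↦ t ^ (((j : ℝ) - 1) / 2) * c j) 1 (m + 1) 1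
  rw [Finset.sum_congr rfl fun j _ ↦ factor j, ← Finset.mul_sum, shift,
    Finset.sum_Icc_succ_top (by lia), Nat.cast_succ, add_sub_cancel_right, add_comm]
  gcongr
  exact mul_le_of_le_one_right (by positivity) hc

lemma sum_rpow_half_mul_succ_add_le (ht : 0 < t) {m : ℕ} (hm : 1 ≤ m) {c : ℕ → ℝ}
    (hc : c (m + 1) ≤ 1) {K D : ℝ} (hK : 0 ≤ K) (hD : 0 ≤ D) :
    ∑ j ∈ Finset.Icc 1 m, t ^ (((j : ℝ) + 1) / 2) * (K * (c (j + 1) + D)) ≤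
      t ^ ((1 : ℝ) / 2) * K *
          (t ^ ((m : ℝ) / 2) + ∑ j ∈ Finset.Icc 2 m, t ^ (((j : ℝ) - 1) / 2) * c j) +
        m * K * (1 + t ^ (((m : ℝ) + 1) / 2)) * D := by
  calc ∑ j ∈ Finset.Icc 1 m, t ^ (((j : ℝ) + 1) / 2) * (K * (c (j + 1) + D))
      = K * ∑ j ∈ Finset.Icc 1 m, t ^ (((j : ℝ) + 1) / 2) * c (j + 1) +
          K * D * ∑ j ∈ Finset.Icc 1 m, t ^ (((j : ℝ) + 1) / 2) := by
        rw [Finset.mul_sum, Finset.mul_sum, ← Finset.sum_add_distrib]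
        exact Finset.sum_congr rfl fun j _ ↦ by ring
    _ ≤ K * (t ^ ((1 : ℝ) / 2) *
            (t ^ ((m : ℝ) / 2) + ∑ j ∈ Finset.Icc 2 m, t ^ (((j : ℝ) - 1) / 2) * c j)) +
          K * D * (m * (1 + t ^ (((m : ℝ) + 1) / 2))) := by
        gcongr
        · exact sum_rpow_half_mul_succ_le ht hm hc
        · exact sum_rpow_half_le ht.le m
    _ = _ := by ring

end Sums

theorem stmt5_general {N : ℕ} {δ : ℝ} (hδ : 0 < δ) {m : ℕ} (hm : 1 ≤ m) {θ : ℝ → ℝ}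
    (hθ : IsCutoff θ) {t : ℝ} (ht : 0 < t) (x : EuclideanSpace ℝ (Fin N)) :
    (∫⁻ s in Ioo (0 : ℝ) t, ∫⁻ y,
        ENNReal.ofReal (heatKernel N (t - s) x y * hFun θ δ m s y)) ≤
      ENNReal.ofReal (
        t ^ ((1 : ℝ) / 2) * (1 + (aCoef δ m) ^ (-(2 : ℝ))) *
          (t ^ ((m : ℝ) / 2) + ∑ j ∈ Finset.Icc 2 m, t ^ (((j : ℝ) - 1) / 2) * cut θ δ j x) +
        (m : ℝ) * 2 ^ ((N : ℝ) / 2) * (1 + (aCoef δ m) ^ (-(2 : ℝ))) *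
          (1 + t ^ (((m : ℝ) + 1) / 2)) * Real.exp (-(aCoef δ (m + 1)) ^ 2 / (8 * t)) +
        2 * (1 / (m : ℝ) + t / ((m : ℝ) + 2)) * t ^ ((m : ℝ) / 2)) := by
  have a_pos := aCoef_pos hδ m
  set K : ℝ := 1 + aCoef δ m ^ (-(2 : ℝ))
  set E : ℝ := rexp (-aCoef δ (m + 1) ^ 2 / (8 * t))
  set D : ℝ := 2 ^ ((N : ℝ) / 2) * E with D_def
  have K_nonneg : 0 ≤ K := by positivity
  have D_nonneg : 0 ≤ D := by positivity
  have space_le : ∀ s ∈ Ioo 0 t,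
      ∫⁻ y, ENNReal.ofReal (heatKernel N (t - s) x y * hFun θ δ m s y) ≤
        ∑ j ∈ Finset.Icc 1 m, ENNReal.ofReal (s ^ (((j : ℝ) - 1) / 2)) *
            ENNReal.ofReal (K * (cut θ δ (j + 1) x + D)) +
          ENNReal.ofReal ((1 + s) * s ^ (((m : ℝ) - 2) / 2)) := fun s ⟨s_pos, s_lt⟩ ↦ by
    rw [lintegral_ofReal_heatKernel_mul (sub_nonneg.2 s_lt.le) (hθ.measurable_hFun δ m s)]
    exact hθ.lintegral_hFun_heatMeasure_le hδ m s_pos.le (sub_pos.2 s_lt)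
      (sub_le_self t s_pos.le) x
  refine (setLIntegral_mono' measurableSet_Ioo space_le).trans <|
    (lintegral_Ioo_sum_rpow_half_add_le ht hm fun j ↦
      mul_nonneg K_nonneg (add_nonneg (hθ.cut_nonneg ..) D_nonneg)).trans (ofReal_le_ofReal ?_)
  gcongr ?_ + _
  refine (sum_rpow_half_mul_succ_add_le (c := fun j ↦ cut θ δ j x) ht hm (hθ.le_one _)
    K_nonneg D_nonneg).trans_eq ?_
  rw [D_def]
  ring

/-- The estimate `∫₀ᵗ e^{(t-s)Δ} h(s,·) ds ≤ …` of Lemma 4.3. -/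
theorem stmt5 (N : ℕ) (hN : 1 ≤ N) (δ : ℝ) (hδ : 0 < δ) (m : ℕ) (hm : 2 ≤ m)
    (θ : ℝ → ℝ) (hθsmooth : ContDiff ℝ (⊤ : ℕ∞) θ) (hθmono : Monotone θ)
    (hθ0 : ∀ s ≤ (1 : ℝ), θ s = 0) (hθ1 : ∀ s : ℝ, 2 ≤ s → θ s = 1)
    (t : ℝ) (ht : 0 < t) (x : EuclideanSpace ℝ (Fin N)) :
    (∫⁻ s in Ioo (0 : ℝ) t, ∫⁻ y,
        ENNReal.ofReal (heatKernel N (t - s) x y * hFun θ δ m s y)) ≤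
      ENNReal.ofReal (
        t ^ ((1 : ℝ) / 2) * (1 + (aCoef δ m) ^ (-(2 : ℝ))) *
          (t ^ ((m : ℝ) / 2) + ∑ j ∈ Finset.Icc 2 m, t ^ (((j : ℝ) - 1) / 2) * cut θ δ j x) +
        (m : ℝ) * 2 ^ ((N : ℝ) / 2) * (1 + (aCoef δ m) ^ (-(2 : ℝ))) *
          (1 + t ^ (((m : ℝ) + 1) / 2)) * Real.exp (-(aCoef δ (m + 1)) ^ 2 / (8 * t)) +
        2 * (1 / (m : ℝ) + t / ((m : ℝ) + 2)) * t ^ ((m : ℝ) / 2)) := by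
  have hθ : IsCutoff θ :=
    ⟨hθmono, hθ0, fun s ↦ (hθmono (le_max_left s 2)).trans_eq (hθ1 _ (le_max_right s 2))⟩
  exact stmt5_general hδ (one_le_two.trans hm) hθ ht x
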